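/- arXiv:2205.07223 — 2 statements merged into one kernel-verified Lean document; each statement's English description precedes it below -/
import Mathlib

section
/- Under the wide-range Hedge setup, suppose the sequence (p^t)_{t=1}^T is consistent with wide-range Hedge, i.e. for every t ∈ {1,…,T} the stationarity equation ∑_{(b,ψ)∈ℐ} w^{t−1}(b,ψ)·S^t_b·p^t = ∑_{(b,ψ)∈ℐ} w^{t−1}(b,ψ)·S^t_b·(ψ∘p^t) holds as an equality of vectors in ℝ^A. Then for every b ∈ B^s and every swap modification ψ ∈ Ψ^s, the wide-range regret satisfies ∑_{t=1}^T S^t_b·(⟨p^t, ℓ^t⟩ − ⟨ψ∘p^t, ℓ^t⟩) ≤ η·∑_{t=1}^T ‖ℓ^t‖_∞·S^t_b·⟨p^t, ℓ^t⟩ + log((|B^s| + |B^e|)·A^A)/η. -/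
open Finset

/-- Pushforward of a vector `p` on `Fin A` under a map `ψ : Fin A → Fin A`:
`(ψ∘p)(a) = ∑_{a' : ψ(a') = a} p(a')`. -/
def pushf {A : ℕ} (ψ : Fin A → Fin A) (p : Fin A → ℝ) : Fin A → ℝ :=
  fun a => ∑ a' ∈ Finset.univ.filter (fun a' => ψ a' = a), p a'

/-- Standard inner product on `ℝ^A`. -/
def ip {A : ℕ} (p ℓ : Fin A → ℝ) : ℝ := ∑ a, p a * ℓ a

/-- Sup norm `‖ℓ‖_∞ = max_a ℓ(a)` (for nonempty `Fin A`). -/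
noncomputable def supNorm {A : ℕ} (ℓ : Fin A → ℝ) : ℝ := sSup (Set.range ℓ)

/-- The set `Ψ^e` of external (constant) modifications on `Fin A`. -/
def PsiE (A : ℕ) : Finset (Fin A → Fin A) :=
  Finset.univ.image fun a => Function.const (Fin A) a

/-!
Let `W t` be the total weight `∑_{(b,ψ) ∈ ℐ} w^t(b,ψ)`. With `L = ‖ℓ^t‖_∞`, `β = exp (-η L)`,
`x = S^t_b ⟨p^t, ℓ^t⟩` and `y = S^t_b ⟨ψ∘p^t, ℓ^t⟩`, both in `[0, L]`, convexity of the
exponential gives `exp (-η y) ≤ 1 - (1 - β) y / L` and `exp (η β x) ≤ 1 + (1 - β) x / L`. Hence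
round `t` multiplies the weight of `(b,ψ)` by at most `1 + ((1 - β) / L) (x - y)`, and the weighted
sum of the terms `x - y` vanishes by stationarity, so `W` does not increase. The prior gives each
index `b` the mass `A ^ A * A`, so `w^T(b,ψ) ≤ W 0 = (|B^s| + |B^e|) A ^ A * A`. For a swap index
the prior is `A`; taking logarithms bounds `η ∑_t (β x - y)`, and `β ≥ 1 - η L` turns this into the
regret bound.
-/

lemma exp_mul_le_one_add_mul_exp_sub_one (c : ℝ) {y : ℝ} (hy0 : 0 ≤ y) (hy1 : y ≤ 1) :
    Real.exp (c * y) ≤ 1 + y * (Real.exp c - 1) := by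
  rw [Real.exp_mul]
  simpa using rpow_one_add_le_one_add_mul_self
    (by linarith [Real.exp_pos c] : -1 ≤ Real.exp c - 1) hy0 hy1

/- Discounting `x` by `exp (-c)` makes the slopes in `x` and `y` opposite, so that the bound depends
on `x - y` only. -/
lemma exp_mul_discount_sub_le {c x y : ℝ} (hc : 0 ≤ c) (hx : x ∈ Set.Icc 0 1)
    (hy : y ∈ Set.Icc 0 1) :
    Real.exp (c * (Real.exp (-c) * x - y)) ≤ 1 + (1 - Real.exp (-c)) * (x - y) := by
  set β := Real.exp (-c) with hβ
  have hβ0 : 0 < β := Real.exp_pos _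
  have hβ1 : 0 ≤ 1 - β := sub_nonneg.2 (Real.exp_le_one_iff.2 (neg_nonpos.2 hc))
  have hβc : β * Real.exp c = 1 := by rw [hβ, ← Real.exp_add, neg_add_cancel, Real.exp_zero]
  have loss_le : Real.exp (-c * y) ≤ 1 - (1 - β) * y := by
    linarith [exp_mul_le_one_add_mul_exp_sub_one (-c) hy.1 hy.2]
  have gain_le : Real.exp (c * (β * x)) ≤ 1 + (1 - β) * x := by
    have h := exp_mul_le_one_add_mul_exp_sub_one c (mul_nonneg hβ0.le hx.1)
      (mul_le_one₀ (by linarith) hx.1 hx.2)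
    linear_combination h + x * hβc
  calc Real.exp (c * (β * x - y))
      = Real.exp (-c * y) * Real.exp (c * (β * x)) := by rw [← Real.exp_add]; ring_nf
    _ ≤ (1 - (1 - β) * y) * (1 + (1 - β) * x) :=
        mul_le_mul loss_le gain_le (Real.exp_pos _).le ((Real.exp_pos _).le.trans loss_le)
    _ = 1 + (1 - β) * (x - y) - ((1 - β) * y) * ((1 - β) * x) := by ring
    _ ≤ 1 + (1 - β) * (x - y) :=
        sub_le_self _ (mul_nonneg (mul_nonneg hβ1 hy.1) (mul_nonneg hβ1 hx.1))

/- For `L = 0` the slope is the junk value `0`; the bound holds because then `x = y = 0`. -/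
lemma exp_mul_discount_sub_le_of_mem_Icc {η L x y : ℝ} (hη : 0 ≤ η) (hx : x ∈ Set.Icc 0 L)
    (hy : y ∈ Set.Icc 0 L) :
    Real.exp (η * (Real.exp (-η * L) * x - y))
      ≤ 1 + (1 - Real.exp (-η * L)) / L * (x - y) := by
  rcases (hx.1.trans hx.2).eq_or_lt with rfl | hL
  · obtain rfl := le_antisymm hx.2 hx.1
    obtain rfl := le_antisymm hy.2 hy.1
    simp
  have div_mem : ∀ z ∈ Set.Icc 0 L, z / L ∈ Set.Icc (0 : ℝ) 1 := fun z hz =>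
    ⟨div_nonneg hz.1 hL.le, (div_le_one hL).2 hz.2⟩
  have h := exp_mul_discount_sub_le (mul_nonneg hη hL.le) (div_mem x hx) (div_mem y hy)
  rw [← neg_mul] at h
  convert h using 2 <;> field_simp

section ExponentialWeights

variable {ι : Type*} {I : Finset ι} {w₀ : ι → ℝ} {η : ℝ}

/-- The exponential weights of Hedge with prior `w₀` and learning rate `η`, after the rounds
`1, …, t` with gains `g s i`; round `0` is the prior. -/
noncomputable def expWeight (w₀ : ι → ℝ) (η : ℝ) (g : ℕ → ι → ℝ) (t : ℕ) (i : ι) : ℝ :=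
  w₀ i * Real.exp (η * ∑ s ∈ Icc 1 t, g s i)

lemma expWeight_zero (w₀ : ι → ℝ) (η : ℝ) (g : ℕ → ι → ℝ) : expWeight w₀ η g 0 = w₀ := by
  funext i
  simp [expWeight]

lemma expWeight_succ (w₀ : ι → ℝ) (η : ℝ) (g : ℕ → ι → ℝ) (t : ℕ) (i : ι) :
    expWeight w₀ η g (t + 1) i = expWeight w₀ η g t i * Real.exp (η * g (t + 1) i) := by
  rw [expWeight, expWeight, sum_Icc_succ_top (Nat.le_add_left 1 t), mul_add, Real.exp_add,
    mul_assoc]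

lemma expWeight_nonneg {i : ι} (hi : 0 ≤ w₀ i) (g : ℕ → ι → ℝ) (t : ℕ) :
    0 ≤ expWeight w₀ η g t i :=
  mul_nonneg hi (Real.exp_pos _).le

lemma sum_expWeight_le_sum_prior {g : ℕ → ι → ℝ} {T : ℕ} (hstep : ∀ t < T,
      ∑ i ∈ I, expWeight w₀ η g (t + 1) i ≤ ∑ i ∈ I, expWeight w₀ η g t i) :
    ∑ i ∈ I, expWeight w₀ η g T i ≤ ∑ i ∈ I, w₀ i := by
  induction T with
  | zero => rw [expWeight_zero]
  | succ T ih =>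
    exact (hstep T T.lt_succ_self).trans (ih fun t ht => hstep t (ht.trans T.lt_succ_self))

lemma sum_gain_le_log_div_of_expWeight_le {g : ℕ → ι → ℝ} {T : ℕ} {W : ℝ} {i : ι} (hη : 0 < η)
    (hi : 0 < w₀ i) (hW : expWeight w₀ η g T i ≤ W) :
    ∑ t ∈ Icc 1 T, g t i ≤ Real.log (W / w₀ i) / η := by
  have hexp : Real.exp (η * ∑ t ∈ Icc 1 T, g t i) ≤ W / w₀ i := by
    rwa [le_div_iff₀' hi]
  rw [le_div_iff₀' hη]
  exact (Real.le_log_iff_exp_le ((Real.exp_pos _).trans_le hexp)).2 hexp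

variable {L : ℕ → ℝ} {x y : ℕ → ι → ℝ} {T : ℕ}

/-- The gain `x` against the gain `y` with `x` discounted by `exp (-η L)`, as in the update rule of
wide-range Hedge. There `x t` and `y t` are the losses of the play before and after a modification,
scaled by the time selection, and `L t` is the sup norm of the loss vector. -/
noncomputable def discountedGain (η : ℝ) (L : ℕ → ℝ) (x y : ℕ → ι → ℝ) (t : ℕ) (i : ι) : ℝ :=
  Real.exp (-η * L t) * x t i - y t i

lemma sum_expWeight_discountedGain_succ_le {t : ℕ} (hη : 0 ≤ η) (hw₀ : ∀ i ∈ I, 0 ≤ w₀ i)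
    (hx : ∀ i ∈ I, x (t + 1) i ∈ Set.Icc 0 (L (t + 1)))
    (hy : ∀ i ∈ I, y (t + 1) i ∈ Set.Icc 0 (L (t + 1)))
    (hbal : ∑ i ∈ I, expWeight w₀ η (discountedGain η L x y) t i *
      (x (t + 1) i - y (t + 1) i) = 0) :
    ∑ i ∈ I, expWeight w₀ η (discountedGain η L x y) (t + 1) i
      ≤ ∑ i ∈ I, expWeight w₀ η (discountedGain η L x y) t i := by
  set w := expWeight w₀ η (discountedGain η L x y) with hw
  set c := (1 - Real.exp (-η * L (t + 1))) / L (t + 1)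
  calc ∑ i ∈ I, w (t + 1) i
      ≤ ∑ i ∈ I, w t i * (1 + c * (x (t + 1) i - y (t + 1) i)) := by
        refine sum_le_sum fun i hi => ?_
        rw [hw, expWeight_succ]
        exact mul_le_mul_of_nonneg_left
          (exp_mul_discount_sub_le_of_mem_Icc hη (hx i hi) (hy i hi))
          (expWeight_nonneg (hw₀ i hi) _ t)
    _ = ∑ i ∈ I, w t i + c * ∑ i ∈ I, w t i * (x (t + 1) i - y (t + 1) i) := by
        rw [mul_sum, ← sum_add_distrib]
        exact sum_congr rfl fun i _ => by ring
    _ = ∑ i ∈ I, w t i := by rw [hbal, mul_zero, add_zero]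

lemma sub_le_add_discountedGain {t : ℕ} {i : ι} (hx : 0 ≤ x t i) :
    x t i - y t i ≤ η * (L t * x t i) + discountedGain η L x y t i := by
  have h := mul_le_mul_of_nonneg_right (Real.add_one_le_exp (-η * L t)) hx
  rw [discountedGain]
  linarith

theorem sum_sub_le_of_expWeight_balanced {i : ι} (hη : 0 < η) (hw₀ : ∀ j ∈ I, 0 ≤ w₀ j)
    (hi : i ∈ I) (hi0 : 0 < w₀ i)
    (hx : ∀ t ∈ Icc 1 T, ∀ j ∈ I, x t j ∈ Set.Icc 0 (L t))
    (hy : ∀ t ∈ Icc 1 T, ∀ j ∈ I, y t j ∈ Set.Icc 0 (L t))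
    (hbal : ∀ t ∈ Icc 1 T, ∑ j ∈ I, expWeight w₀ η (discountedGain η L x y) (t - 1) j *
      (x t j - y t j) = 0) :
    ∑ t ∈ Icc 1 T, (x t i - y t i)
      ≤ η * ∑ t ∈ Icc 1 T, L t * x t i + Real.log ((∑ j ∈ I, w₀ j) / w₀ i) / η := by
  have potential_le : ∑ j ∈ I, expWeight w₀ η (discountedGain η L x y) T j ≤ ∑ j ∈ I, w₀ j := by
    refine sum_expWeight_le_sum_prior fun t ht => ?_
    have ht' : t + 1 ∈ Icc 1 T := mem_Icc.2 ⟨Nat.le_add_left 1 t, ht⟩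
    exact sum_expWeight_discountedGain_succ_le hη.le hw₀ (hx _ ht') (hy _ ht')
      (by simpa only [Nat.add_sub_cancel] using hbal _ ht')
  have weight_le : expWeight w₀ η (discountedGain η L x y) T i ≤ ∑ j ∈ I, w₀ j :=
    (single_le_sum (fun j hj => expWeight_nonneg (hw₀ j hj) _ T) hi).trans potential_le
  calc ∑ t ∈ Icc 1 T, (x t i - y t i)
      ≤ ∑ t ∈ Icc 1 T, (η * (L t * x t i) + discountedGain η L x y t i) :=
        sum_le_sum fun t ht => sub_le_add_discountedGain (hx t ht i hi).1
    _ = η * ∑ t ∈ Icc 1 T, L t * x t i + ∑ t ∈ Icc 1 T, discountedGain η L x y t i := by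
        rw [sum_add_distrib, mul_sum]
    _ ≤ η * ∑ t ∈ Icc 1 T, L t * x t i + Real.log ((∑ j ∈ I, w₀ j) / w₀ i) / η :=
        add_le_add le_rfl (sum_gain_le_log_div_of_expWeight_le hη hi0 weight_le)

end ExponentialWeights

section WideRangeHedge

variable {A : ℕ}

lemma pushf_mem_stdSimplex (ψ : Fin A → Fin A) {p : Fin A → ℝ} (hp : p ∈ stdSimplex ℝ (Fin A)) :
    pushf ψ p ∈ stdSimplex ℝ (Fin A) :=
  ⟨fun _ => sum_nonneg fun a' _ => hp.1 a', (sum_fiberwise univ ψ p).trans hp.2⟩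

lemma ip_mem_Icc_supNorm {p ℓ : Fin A → ℝ} (hp : p ∈ stdSimplex ℝ (Fin A)) (hℓ : ∀ a, 0 ≤ ℓ a) :
    ip p ℓ ∈ Set.Icc 0 (supNorm ℓ) := by
  refine ⟨sum_nonneg fun a _ => mul_nonneg (hp.1 a) (hℓ a), ?_⟩
  calc ip p ℓ ≤ ∑ a, p a * supNorm ℓ := sum_le_sum fun a _ =>
        mul_le_mul_of_nonneg_left (le_csSup (Set.finite_range ℓ).bddAbove ⟨a, rfl⟩) (hp.1 a)
    _ = supNorm ℓ := by rw [← sum_mul, hp.2, one_mul]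

lemma mul_ip_mem_Icc_supNorm {s : ℝ} {p ℓ : Fin A → ℝ} (hs : s ∈ Set.Icc 0 1)
    (hp : p ∈ stdSimplex ℝ (Fin A)) (hℓ : ∀ a, 0 ≤ ℓ a) : s * ip p ℓ ∈ Set.Icc 0 (supNorm ℓ) :=
  have hip := ip_mem_Icc_supNorm hp hℓ
  ⟨mul_nonneg hs.1 hip.1, (mul_le_of_le_one_left hip.1 hs.2).trans hip.2⟩

lemma sum_mul_ip {ι : Type*} (I : Finset ι) (c : ι → ℝ) (q : ι → Fin A → ℝ) (ℓ : Fin A → ℝ) :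
    ∑ i ∈ I, c i * ip (q i) ℓ = ip (fun a => ∑ i ∈ I, c i * q i a) ℓ := by
  simp only [ip, mul_sum, sum_mul, mul_assoc]
  exact sum_comm

lemma sum_mul_sub_ip_eq_zero {ι : Type*} {I : Finset ι} {c s : ι → ℝ} {q r : ι → Fin A → ℝ}
    (h : ∀ a, ∑ i ∈ I, c i * s i * q i a = ∑ i ∈ I, c i * s i * r i a) (ℓ : Fin A → ℝ) :
    ∑ i ∈ I, c i * (s i * ip (q i) ℓ - s i * ip (r i) ℓ) = 0 := by
  simp only [mul_sub, ← mul_assoc, sum_sub_distrib]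
  rw [sub_eq_zero, sum_mul_ip I (fun i => c i * s i) q, sum_mul_ip I (fun i => c i * s i) r,
    funext h]

variable {B : Type*}

/-- The weights `w^t(b,ψ)` of wide-range Hedge, for an arbitrary prior `w₀`: exponential weights
whose gain compares the scaled loss of the play with that of its modification by `ψ`. -/
noncomputable def wideRangeWeight (w₀ : B × (Fin A → Fin A) → ℝ) (η : ℝ) (S : ℕ → B → ℝ)
    (p ℓ : ℕ → Fin A → ℝ) : ℕ → B × (Fin A → Fin A) → ℝ :=
  expWeight w₀ η (discountedGain η (fun t => supNorm (ℓ t)) (fun t bψ => S t bψ.1 * ip (p t) (ℓ t))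
    fun t bψ => S t bψ.1 * ip (pushf bψ.2 (p t)) (ℓ t))

theorem wideRange_regret_le_of_stationary {I : Finset (B × (Fin A → Fin A))}
    {w₀ : B × (Fin A → Fin A) → ℝ} {η : ℝ} {S : ℕ → B → ℝ} {p ℓ : ℕ → Fin A → ℝ} {T : ℕ} {b : B}
    {ψ : Fin A → Fin A} (hη : 0 < η) (hw₀ : ∀ bψ ∈ I, 0 ≤ w₀ bψ) (hbψ : (b, ψ) ∈ I)
    (hbψ0 : 0 < w₀ (b, ψ)) (hS : ∀ t ∈ Icc 1 T, ∀ bψ ∈ I, S t bψ.1 ∈ Set.Icc 0 1)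
    (hℓ : ∀ t ∈ Icc 1 T, ∀ a, 0 ≤ ℓ t a) (hp : ∀ t ∈ Icc 1 T, p t ∈ stdSimplex ℝ (Fin A))
    (hstat : ∀ t ∈ Icc 1 T, ∀ a,
      ∑ bψ ∈ I, wideRangeWeight w₀ η S p ℓ (t - 1) bψ * S t bψ.1 * p t a
        = ∑ bψ ∈ I, wideRangeWeight w₀ η S p ℓ (t - 1) bψ * S t bψ.1 * pushf bψ.2 (p t) a) :
    ∑ t ∈ Icc 1 T, S t b * (ip (p t) (ℓ t) - ip (pushf ψ (p t)) (ℓ t))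
      ≤ η * ∑ t ∈ Icc 1 T, supNorm (ℓ t) * S t b * ip (p t) (ℓ t)
        + Real.log ((∑ bψ ∈ I, w₀ bψ) / w₀ (b, ψ)) / η := by
  simp only [mul_sub, mul_assoc (supNorm _)]
  exact sum_sub_le_of_expWeight_balanced (L := fun t => supNorm (ℓ t))
    (x := fun t bψ => S t bψ.1 * ip (p t) (ℓ t))
    (y := fun t bψ => S t bψ.1 * ip (pushf bψ.2 (p t)) (ℓ t)) hη hw₀ hbψ hbψ0
    (fun t ht bψ h => mul_ip_mem_Icc_supNorm (hS t ht bψ h) (hp t ht) (hℓ t ht))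
    (fun t ht bψ h =>
      mul_ip_mem_Icc_supNorm (hS t ht bψ h) (pushf_mem_stdSimplex bψ.2 (hp t ht)) (hℓ t ht))
    fun t ht => sum_mul_sub_ip_eq_zero (c := wideRangeWeight w₀ η S p ℓ (t - 1))
      (s := fun bψ => S t bψ.1) (q := fun _ => p t) (hstat t ht) (ℓ t)

lemma card_PsiE (A : ℕ) : (PsiE A).card = A := by
  rw [PsiE, card_image_of_injOn fun a _ b _ h => congrFun h a, card_univ, Fintype.card_fin]

variable [DecidableEq B]

/-- The prior weights of wide-range Hedge, with `Be` the external time-selection indices. They are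
balanced so that every index, swap or external, carries the total mass `A ^ A * A`. -/
def hedgePrior (Be : Finset B) (bψ : B × (Fin A → Fin A)) : ℝ :=
  if bψ.1 ∈ Be then (A : ℝ) ^ A else A

lemma hedgePrior_of_mem {Be : Finset B} {bψ : B × (Fin A → Fin A)} (h : bψ.1 ∈ Be) :
    hedgePrior Be bψ = (A : ℝ) ^ A :=
  if_pos h

lemma hedgePrior_of_notMem {Be : Finset B} {bψ : B × (Fin A → Fin A)} (h : bψ.1 ∉ Be) :
    hedgePrior Be bψ = A :=
  if_neg h

lemma hedgePrior_nonneg (Be : Finset B) (bψ : B × (Fin A → Fin A)) : 0 ≤ hedgePrior Be bψ := by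
  rw [hedgePrior]
  split_ifs <;> positivity

lemma sum_hedgePrior (A : ℕ) {Bs Be : Finset B} (hdisj : Disjoint Bs Be) :
    ∑ bψ ∈ Bs ×ˢ univ ∪ Be ×ˢ PsiE A, hedgePrior Be bψ
      = ((Bs.card : ℝ) + Be.card) * (A : ℝ) ^ A * A := by
  have swap_sum : ∑ bψ ∈ Bs ×ˢ (univ : Finset (Fin A → Fin A)), hedgePrior Be bψ
      = Bs.card * (A : ℝ) ^ A * A := by
    rw [sum_congr rfl fun bψ h => hedgePrior_of_notMem (disjoint_left.1 hdisj (mem_product.1 h).1)]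
    simp [card_product]
  have external_sum : ∑ bψ ∈ Be ×ˢ PsiE A, hedgePrior Be bψ = Be.card * A * (A : ℝ) ^ A := by
    rw [sum_congr rfl fun bψ h => hedgePrior_of_mem (mem_product.1 h).1]
    simp [card_product, card_PsiE]
  rw [sum_union (disjoint_product.2 (Or.inl hdisj)), swap_sum, external_sum]
  ring

end WideRangeHedge

/-- Wide-range regret bound of wide-range Hedge, swap part: if the play `(p^t)` satisfies
the stationarity equations of wide-range Hedge, then for every swap time-selection index
`b ∈ B^s` and every swap modification `ψ`,
`∑_t S^t_b (⟨p^t, ℓ^t⟩ − ⟨ψ∘p^t, ℓ^t⟩)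
  ≤ η ∑_t ‖ℓ^t‖_∞ S^t_b ⟨p^t, ℓ^t⟩ + log((|B^s|+|B^e|)·A^A)/η`. -/
theorem stmt0
    (A : ℕ) (hA : 1 ≤ A)
    (B : Type) [Fintype B] [DecidableEq B]
    (Bs Be : Finset B) (hdisj : Disjoint Bs Be)
    (hBs : Bs.Nonempty) (hBe : Be.Nonempty)
    (ℐ : Finset (B × (Fin A → Fin A)))
    (hℐ : ℐ = Bs ×ˢ (Finset.univ : Finset (Fin A → Fin A)) ∪ Be ×ˢ PsiE A)
    (T : ℕ) (hT : 1 ≤ T)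
    (S : ℕ → B → ℝ)
    (hS : ∀ t ∈ Finset.Icc 1 T, ∀ b ∈ Bs ∪ Be, 0 ≤ S t b ∧ S t b ≤ 1)
    (ℓ : ℕ → Fin A → ℝ)
    (hℓ : ∀ t ∈ Finset.Icc 1 T, ∀ a, 0 ≤ ℓ t a)
    (η : ℝ) (hη : 0 < η)
    (p : ℕ → Fin A → ℝ)
    (hp : ∀ t ∈ Finset.Icc 1 T, (∀ a, 0 ≤ p t a) ∧ ∑ a, p t a = 1)
    (w : ℕ → B × (Fin A → Fin A) → ℝ)
    (hw : ∀ t, ∀ bψ : B × (Fin A → Fin A), w t bψ =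
      (if bψ.1 ∈ Be then (A : ℝ) ^ (A : ℕ) else (A : ℝ)) *
        Real.exp (η * ∑ s ∈ Finset.Icc 1 t,
          (Real.exp (-η * supNorm (ℓ s)) * S s bψ.1 * ip (p s) (ℓ s)
            - S s bψ.1 * ip (pushf bψ.2 (p s)) (ℓ s))))
    (hstat : ∀ t ∈ Finset.Icc 1 T, ∀ a : Fin A,
      ∑ bψ ∈ ℐ, w (t - 1) bψ * S t bψ.1 * p t a
        = ∑ bψ ∈ ℐ, w (t - 1) bψ * S t bψ.1 * pushf bψ.2 (p t) a) :
    ∀ b ∈ Bs, ∀ ψ : Fin A → Fin A,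
      ∑ t ∈ Finset.Icc 1 T, S t b * (ip (p t) (ℓ t) - ip (pushf ψ (p t)) (ℓ t))
        ≤ η * ∑ t ∈ Finset.Icc 1 T, supNorm (ℓ t) * S t b * ip (p t) (ℓ t)
          + Real.log (((Bs.card : ℝ) + (Be.card : ℝ)) * (A : ℝ) ^ (A : ℕ)) / η := by
  intro b hb ψ
  have hA0 : (0 : ℝ) < A := Nat.cast_pos.2 hA
  have prior_swap : hedgePrior Be (b, ψ) = A := hedgePrior_of_notMem (disjoint_left.1 hdisj hb)
  subst hℐ
  obtain rfl : w = wideRangeWeight (hedgePrior Be) η S p ℓ := by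
    funext t bψ
    simp only [hw, wideRangeWeight, expWeight, hedgePrior, discountedGain, mul_assoc]
  have hS' : ∀ t ∈ Icc 1 T, ∀ bψ ∈ Bs ×ˢ univ ∪ Be ×ˢ PsiE A, S t bψ.1 ∈ Set.Icc 0 1 :=
    fun t ht bψ h => hS t ht bψ.1 <| mem_union.2 <|
      (mem_union.1 h).imp (fun h => (mem_product.1 h).1) fun h => (mem_product.1 h).1
  have regret_le := wideRange_regret_le_of_stationary hη (fun bψ _ => hedgePrior_nonneg Be bψ)
    (mem_union_left _ (mk_mem_product hb (mem_univ ψ))) (prior_swap ▸ hA0) hS' hℓ hp hstat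
  rwa [sum_hedgePrior A hdisj, prior_swap, mul_div_cancel_right₀ _ hA0.ne'] at regret_le
end

section
/- For all integers K ≥ 1 and H ≥ 1, the cardinality of the set {(h, W̄) : 1 ≤ h ≤ H, W̄ ⊆ {1,…,h−1}, |W̄| = min(K−1, h−1)} plus the cardinality of the set {(h, h', W) : 1 ≤ h' < h ≤ H, W ⊆ {1,…,h'}, |W| = K, max(W) = h'} equals C(H+1, min(K,H)+1) + min(K,H) − 1, where C(n,k) denotes the binomial coefficient (with C(n,k) = 0 when k > n). -/
/-!
Fix the level `h` and put `n = h - 1`. The Type-I policies at this level are the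
`min (K - 1) n`-subsets of `{1, …, n}`. In a Type-II policy `h'` is determined by `W`, so at this
level they are the `K`-subsets of `{1, …, n}`. Summing over `n < H`, the hockey-stick identity gives
`C(H, K) + min (K - 1) H`, where the second term collects the levels at which the minimum is `n`
and the only subset is the full one, and `C(H, K + 1)`. Pascal's rule adds the two binomials.
-/

open Finset

section CountingPairs

variable {α β : Type*}

theorem card_filter_product_eq_sum (s : Finset α) (t : Finset β) (p : α × β → Prop)
    [DecidablePred p] :
    #{x ∈ s ×ˢ t | p x} = ∑ a ∈ s, #{b ∈ t | p (a, b)} := by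
  simp only [card_filter, sum_product]

theorem filter_powerset_subset_card_eq [DecidableEq α] {s t : Finset α} (hst : s ⊆ t) (k : ℕ) :
    {W ∈ t.powerset | W ⊆ s ∧ #W = k} = s.powersetCard k := by
  ext W
  simp only [mem_filter, mem_powerset, mem_powersetCard, and_iff_right_iff_imp]
  exact fun hW ↦ hW.1.trans hst

theorem card_filter_max_eq_choose [LinearOrder α] (s : Finset α) {k : ℕ} (hk : k ≠ 0) :
    #{x ∈ s ×ˢ s.powersetCard k | x.2.max = x.1} = (#s).choose k := by
  rw [← card_powersetCard]
  refine card_nbij Prod.snd (fun x hx ↦ (mem_product.mp (mem_filter.mp hx).1).2) ?_ ?_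
  · rintro ⟨m, W⟩ hm ⟨m', W'⟩ hm' (rfl : W = W')
    have hmm' : (m : WithBot α) = m' := (mem_filter.mp hm).2.symm.trans (mem_filter.mp hm').2
    rw [WithBot.coe_injective hmm']
  · intro W hW
    obtain ⟨hWs, hWk⟩ := mem_powersetCard.mp hW
    have hWne : W.Nonempty := card_ne_zero.mp (hWk ▸ hk)
    obtain ⟨m, hm⟩ := max_of_nonempty hWne
    exact ⟨(m, W), mem_filter.mpr ⟨mk_mem_product (hWs (mem_of_max hm)) hW, hm⟩, rfl⟩

end CountingPairs

section BinomialSums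

theorem sum_Icc_one_pred {M : Type*} [AddCommMonoid M] (f : ℕ → M) (n : ℕ) :
    ∑ i ∈ Icc 1 n, f (i - 1) = ∑ i ∈ range n, f i := by
  rw [← Ico_add_one_right_eq_Icc, sum_Ico_eq_sum_range]
  simp only [Nat.add_sub_cancel, Nat.add_sub_cancel_left]

theorem sum_range_choose_right (n k : ℕ) : ∑ i ∈ range n, i.choose k = n.choose (k + 1) := by
  induction n with
  | zero => rfl
  | succ n ih => rw [sum_range_succ, ih, Nat.choose_succ_succ', add_comm]

theorem sum_range_choose_min (n k : ℕ) :
    ∑ i ∈ range n, i.choose (min k i) = n.choose (k + 1) + min k n := by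
  induction n with
  | zero => simp
  | succ n ih =>
    rw [sum_range_succ, ih, Nat.choose_succ_succ']
    rcases le_or_gt k n with hkn | hnk
    · rw [min_eq_left hkn, min_eq_left (Nat.le_succ_of_le hkn)]
      ring
    · rw [min_eq_right hnk.le, min_eq_right hnk, Nat.choose_self, Nat.choose_eq_zero_of_lt hnk]
      ring

theorem choose_succ_min_add_min (n k : ℕ) :
    (n + 1).choose (min (k + 1) n + 1) + min (k + 1) n
      = (n + 1).choose (k + 2) + min k n + 1 := by
  rcases lt_or_ge k n with hkn | hnk
  · rw [min_eq_left (Nat.succ_le_of_lt hkn), min_eq_left hkn.le, add_assoc]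
  · rw [min_eq_right (Nat.le_succ_of_le hnk), min_eq_right hnk, Nat.choose_self,
      Nat.choose_eq_zero_of_lt (by omega)]
    ring

end BinomialSums

section SamplingPolicies

/-- The Type-I sampling policies `(h, W̄)` of Balanced `K`-EFR with horizon `H`. The factor
`(Icc 1 H).powerset` only bounds the ambient set. -/
def typeIPolicies (K H : ℕ) : Finset (ℕ × Finset ℕ) :=
  {x ∈ Icc 1 H ×ˢ (Icc 1 H).powerset | x.2 ⊆ Icc 1 (x.1 - 1) ∧ #x.2 = min (K - 1) (x.1 - 1)}

/-- The Type-II sampling policies `(h, h', W)` of Balanced `K`-EFR with horizon `H`. The maximum is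
taken in `WithBot ℕ`, so that `max W = h'` forces `W` to be nonempty. -/
def typeIIPolicies (K H : ℕ) : Finset (ℕ × ℕ × Finset ℕ) :=
  {x ∈ Icc 1 H ×ˢ Icc 1 H ×ˢ (Icc 1 H).powerset |
    x.2.1 < x.1 ∧ x.2.2 ⊆ Icc 1 x.2.1 ∧ #x.2.2 = K ∧ x.2.2.max = (x.2.1 : WithBot ℕ)}

theorem card_typeIPolicies (k H : ℕ) :
    #(typeIPolicies (k + 1) H) = H.choose (k + 1) + min k H := by
  have card_level : ∀ h ∈ Icc 1 H,
      #{W ∈ (Icc 1 H).powerset | W ⊆ Icc 1 (h - 1) ∧ #W = min k (h - 1)}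
        = (h - 1).choose (min k (h - 1)) := by
    intro h hh
    have hsub : Icc 1 (h - 1) ⊆ Icc 1 H :=
      Icc_subset_Icc_right ((Nat.sub_le h 1).trans (mem_Icc.mp hh).2)
    rw [filter_powerset_subset_card_eq hsub, card_powersetCard, Nat.card_Icc, Nat.add_sub_cancel]
  calc #(typeIPolicies (k + 1) H)
      = ∑ h ∈ Icc 1 H, (h - 1).choose (min k (h - 1)) :=
        (card_filter_product_eq_sum _ _ _).trans (sum_congr rfl card_level)
    _ = ∑ n ∈ range H, n.choose (min k n) :=
        sum_Icc_one_pred (fun n ↦ n.choose (min k n)) H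
    _ = H.choose (k + 1) + min k H := sum_range_choose_min H k

-- On the left the coercion of `x.1` elaborates to `Nat.cast`, which is `WithBot.some` by unfolding.
theorem filter_typeII_level_eq {h H : ℕ} (hh : h ∈ Icc 1 H) (K : ℕ) :
    {x ∈ Icc 1 H ×ˢ (Icc 1 H).powerset |
        x.1 < h ∧ x.2 ⊆ Icc 1 x.1 ∧ #x.2 = K ∧ x.2.max = (x.1 : WithBot ℕ)}
      = {x ∈ Icc 1 (h - 1) ×ˢ (Icc 1 (h - 1)).powersetCard K | x.2.max = WithBot.some x.1} := by
  ext ⟨m, W⟩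
  simp only [mem_filter, mem_product, mem_powerset, mem_powersetCard, mem_Icc] at hh ⊢
  constructor
  · rintro ⟨⟨hm, -⟩, hmh, hWm, hWK, hmax⟩
    exact ⟨⟨by omega, hWm.trans (Icc_subset_Icc_right (by omega)), hWK⟩, hmax⟩
  · rintro ⟨⟨hm, hWh, hWK⟩, hmax⟩
    have hWm : W ⊆ Icc 1 m := fun a ha ↦
      mem_Icc.mpr ⟨(mem_Icc.mp (hWh ha)).1, le_max_of_eq ha hmax⟩
    exact ⟨⟨by omega, hWh.trans (Icc_subset_Icc_right (by omega))⟩, by omega, hWm, hWK, hmax⟩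

theorem card_typeIIPolicies {K : ℕ} (hK : K ≠ 0) (H : ℕ) :
    #(typeIIPolicies K H) = H.choose (K + 1) := by
  have card_level : ∀ h ∈ Icc 1 H,
      #{x ∈ Icc 1 H ×ˢ (Icc 1 H).powerset |
          x.1 < h ∧ x.2 ⊆ Icc 1 x.1 ∧ #x.2 = K ∧ x.2.max = (x.1 : WithBot ℕ)}
        = (h - 1).choose K := by
    intro h hh
    rw [filter_typeII_level_eq hh, card_filter_max_eq_choose _ hK, Nat.card_Icc,
      Nat.add_sub_cancel]
  calc #(typeIIPolicies K H)
      = ∑ h ∈ Icc 1 H, (h - 1).choose K :=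
        (card_filter_product_eq_sum _ _ _).trans (sum_congr rfl card_level)
    _ = ∑ n ∈ range H, n.choose K := sum_Icc_one_pred (fun n ↦ n.choose K) H
    _ = H.choose (K + 1) := sum_range_choose_right H K

end SamplingPolicies

/-- The exact episode count of one call of the two sampling subroutines in Balanced K-EFR:
the number of Type-I sampling policies `(h, W̄)` with `1 ≤ h ≤ H`, `W̄ ⊆ {1,…,h−1}`,
`|W̄| = min(K−1, h−1)`, plus the number of Type-II sampling policies `(h, h', W)` with
`1 ≤ h' < h ≤ H`, `W ⊆ {1,…,h'}`, `|W| = K`, `max(W) = h'`, equals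
`C(H+1, min(K,H)+1) + min(K,H) − 1`. -/
theorem stmt9 (K H : ℕ) (hK : 1 ≤ K) (hH : 1 ≤ H) :
    ((Finset.Icc 1 H ×ˢ (Finset.Icc 1 H).powerset).filter
        (fun x : ℕ × Finset ℕ =>
          x.2 ⊆ Finset.Icc 1 (x.1 - 1) ∧ x.2.card = min (K - 1) (x.1 - 1))).card
    + ((Finset.Icc 1 H ×ˢ Finset.Icc 1 H ×ˢ (Finset.Icc 1 H).powerset).filter
        (fun x : ℕ × ℕ × Finset ℕ =>
          x.2.1 < x.1 ∧ x.2.2 ⊆ Finset.Icc 1 x.2.1 ∧ x.2.2.card = K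
            ∧ x.2.2.max = (x.2.1 : WithBot ℕ))).card
    = Nat.choose (H + 1) (min K H + 1) + min K H - 1 := by
  change #(typeIPolicies K H) + #(typeIIPolicies K H) = _
  obtain ⟨k, rfl⟩ : ∃ k, K = k + 1 := Nat.exists_eq_add_of_le' hK
  calc #(typeIPolicies (k + 1) H) + #(typeIIPolicies (k + 1) H)
      = H.choose (k + 1) + min k H + H.choose (k + 2) := by
        rw [card_typeIPolicies, card_typeIIPolicies k.succ_ne_zero]
    _ = (H + 1).choose (k + 2) + min k H := by
        rw [Nat.choose_succ_succ' H (k + 1), add_right_comm]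
    _ = (H + 1).choose (min (k + 1) H + 1) + min (k + 1) H - 1 := by
        rw [choose_succ_min_add_min, Nat.add_sub_cancel]
end
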